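/- arXiv:1207.5822 — 3 statements merged into one kernel-verified Lean document; each statement's English description precedes it below -/
import Mathlib

section
/- Let κ be an inaccessible cardinal, η < κ an ordinal, and ⟨p_ξ : ξ < η⟩ a ⊆-decreasing sequence of perfect κ-trees. Then the intersection ⋂_{ξ<η} p_ξ is a perfect κ-tree, and hence is a lower bound of the sequence. In particular, the poset Sacks(κ) of perfect κ-trees ordered by inclusion is <κ-closed. -/
open Set Cardinal

noncomputable section

/-- A node of the binary tree `2^{<κ}`: a binary sequence of ordinal length `len < κ`,
coded as a function on all ordinals that takes the value `false` from `len` onwards. -/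
structure BNode (κ : Cardinal.{0}) : Type 1 where
  len : Ordinal.{0}
  len_lt : len < κ.ord
  val : Ordinal.{0} → Bool
  val_false : ∀ i, len ≤ i → val i = false

namespace BNode

variable {κ : Cardinal.{0}}

/-- `s.Ext t` means that `t` extends `s`, i.e. `s ⊆ t` as partial functions
(`s` is an initial segment of `t`). -/
def Ext (s t : BNode κ) : Prop :=
  s.len ≤ t.len ∧ ∀ i, i < s.len → t.val i = s.val i

/-- `s.snoc b` is the concatenation `s⌢b`.  (When `κ` is an infinite cardinal the
`dite` always takes the first branch, since `κ.ord` is a limit ordinal.) -/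
def snoc (s : BNode κ) (b : Bool) : BNode κ :=
  if h : s.len + 1 < κ.ord then
    { len := s.len + 1
      len_lt := h
      val := fun i => if i < s.len then s.val i else if i = s.len then b else false
      val_false := by
        intro i hi
        have h1 : s.len < i :=
          lt_of_lt_of_le (by rw [Ordinal.add_one_eq_succ]; exact Order.lt_succ _) hi
        simp [not_lt_of_gt h1, h1.ne'] }
  else s

end BNode

/-- `C` is a closed unbounded subset of the ordinal `L`. -/
def IsClubIn (L : Ordinal.{0}) (C : Set Ordinal.{0}) : Prop :=
  (∀ c ∈ C, c < L) ∧
  (∀ o, o < L → o ≠ 0 → (∀ i, i < o → ∃ c ∈ C, i < c ∧ c < o) → o ∈ C) ∧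
  (∀ i, i < L → ∃ c ∈ C, i < c)

/-- `s` splits in `p`: both `s⌢0` and `s⌢1` belong to `p`. -/
def Splits {κ : Cardinal.{0}} (p : Set (BNode κ)) (s : BNode κ) : Prop :=
  s.snoc false ∈ p ∧ s.snoc true ∈ p

/-- `C` is a splitting club for `p`: a closed unbounded subset of `κ` such that a node
`s ∈ p` splits in `p` if and only if `length s ∈ C`. -/
def IsSplitClub {κ : Cardinal.{0}} (p : Set (BNode κ)) (C : Set Ordinal.{0}) : Prop :=
  IsClubIn κ.ord C ∧ ∀ s ∈ p, (Splits p s ↔ s.len ∈ C)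

/-- `p ⊆ 2^{<κ}` is a perfect `κ`-tree:
(1) closed under initial segments;
(2) closed under unions of `⊆`-increasing chains of length `< κ` (the union being the
unique node `u` extending every member of the chain and whose length is the supremum
of the lengths);
(3) every node has a splitting extension;
(4) there is a club `C ⊆ κ` such that a node of `p` splits iff its length lies in `C`. -/
def IsPerfectTree {κ : Cardinal.{0}} (p : Set (BNode κ)) : Prop :=
  (∀ t ∈ p, ∀ s : BNode κ, s.Ext t → s ∈ p) ∧
  (∀ η : Ordinal.{0}, η < κ.ord → ∀ f : Ordinal.{0} → BNode κ,
      (∀ α β, α < β → β < η → (f α).Ext (f β)) →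
      (∀ α, α < η → f α ∈ p) →
      ∀ u : BNode κ, (∀ α, α < η → (f α).Ext u) →
        (∀ i, i < u.len → ∃ α, α < η ∧ i < (f α).len) → u ∈ p) ∧
  (∀ s ∈ p, ∃ t ∈ p, s.Ext t ∧ Splits p t) ∧
  (∃ C : Set Ordinal.{0}, IsSplitClub p C)

/-- The canonical splitting club of `p`: the set of lengths of splitting nodes of `p`.
For a perfect `κ`-tree (with `κ` inaccessible) this coincides with the unique
splitting club `C(p)`. -/
def splitClub {κ : Cardinal.{0}} (p : Set (BNode κ)) : Set Ordinal.{0} :=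
  {o | ∃ s ∈ p, s.len = o ∧ Splits p s}

/-- `Split_i(p)`: the nodes of `p` whose length is the `i`-th element of the increasing
enumeration of the splitting club of `p`. -/
def SplitLev {κ : Cardinal.{0}} (p : Set (BNode κ)) (i : Ordinal.{0}) : Set (BNode κ) :=
  {s ∈ p | s.len = Ordinal.enumOrd (splitClub p) i}

/-- The thinning `p↾s = {t ∈ p : s ⊆ t or t ⊆ s}`. -/
def thinTree {κ : Cardinal.{0}} (p : Set (BNode κ)) (s : BNode κ) : Set (BNode κ) :=
  {t ∈ p | s.Ext t ∨ t.Ext s}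

/-- A condition in `Sacks(κ,λ)`: a `λ`-indexed family of perfect `κ`-trees (coded as a
function on all ordinals which is the full tree `2^{<κ}` off `λ`) whose support
(the set of coordinates where it is not the full tree) has cardinality at most `κ`. -/
def SacksCond (κ lam : Cardinal.{0}) (p : Ordinal.{0} → Set (BNode κ)) : Prop :=
  (∀ α, α < lam.ord → IsPerfectTree (p α)) ∧
  (∀ α, ¬ α < lam.ord → p α = Set.univ) ∧
  #{α : Ordinal.{0} | α < lam.ord ∧ p α ≠ Set.univ} ≤ Cardinal.lift.{1} κ

/-- The (coordinatewise) order on `Sacks(κ,λ)`. -/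
def SacksLe {κ : Cardinal.{0}} (lam : Cardinal.{0}) (p q : Ordinal.{0} → Set (BNode κ)) : Prop :=
  ∀ α, α < lam.ord → p α ⊆ q α

/-- The forcing `Sacks(κ,λ)` as a partial order. -/
def SacksProd (κ lam : Cardinal.{0}) : Type 1 :=
  {p : Ordinal.{0} → Set (BNode κ) // SacksCond κ lam p}

instance SacksProd.instPartialOrder (κ lam : Cardinal.{0}) : PartialOrder (SacksProd κ lam) where
  le p q := ∀ α, p.1 α ⊆ q.1 α
  le_refl p α := subset_rfl
  le_trans p q r h1 h2 α := (h1 α).trans (h2 α)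
  le_antisymm p q h1 h2 := Subtype.ext (funext fun α => subset_antisymm (h1 α) (h2 α))

/-- A partial order is almost homogeneous if for any `p, q` there is an order
automorphism `f` such that `f p` and `q` are compatible. -/
def AlmostHomogeneous (P : Type*) [Preorder P] : Prop :=
  ∀ p q : P, ∃ f : P ≃o P, ∃ r : P, r ≤ f p ∧ r ≤ q

/-- A condition in the Cohen forcing `Add(γ,λ)`: a partial function from `λ × γ` to `2`
(coded as a functional set of triples) of cardinality less than `γ`. -/
def CohenCond (γ lam : Cardinal.{0}) (s : Set (Ordinal.{0} × Ordinal.{0} × Bool)) : Prop :=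
  (∀ x ∈ s, x.1 < lam.ord ∧ x.2.1 < γ.ord) ∧
  (∀ a b u v, (a, b, u) ∈ s → (a, b, v) ∈ s → u = v) ∧
  #s < Cardinal.lift.{1} γ

/-- The Cohen forcing `Add(γ,λ)`, ordered by reverse inclusion. -/
def CohenPoset (γ lam : Cardinal.{0}) : Type 1 := {s // CohenCond γ lam s}

instance CohenPoset.instPartialOrder (γ lam : Cardinal.{0}) : PartialOrder (CohenPoset γ lam) where
  le p q := q.1 ⊆ p.1
  le_refl p := subset_rfl
  le_trans p q r h1 h2 := Set.Subset.trans h2 h1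
  le_antisymm p q h1 h2 := Subtype.ext (subset_antisymm h2 h1)

/-- `q` is an `(S,a)`-thinning of `p`: on each coordinate `ξ ∈ S`, the tree `p ξ` is
thinned below some node on its `a`-th splitting level, and `q` agrees with `p` off `S`. -/
def IsThinning {κ : Cardinal.{0}} (S : Set Ordinal.{0}) (a : Ordinal.{0})
    (p q : Ordinal.{0} → Set (BNode κ)) : Prop :=
  (∀ ξ, ξ ∉ S → q ξ = p ξ) ∧
  ∀ ξ ∈ S, ∃ s ∈ SplitLev (p ξ) a, q ξ = thinTree (p ξ) s

/-- `p` reduces `D`: for some `S ⊆ λ` of size `< κ` and some `a < κ`, every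
`(S,a)`-thinning of `p` belongs to `D`. -/
def ReducesDense (κ lam : Cardinal.{0}) (p : SacksProd κ lam)
    (D : Set (SacksProd κ lam)) : Prop :=
  ∃ S : Set Ordinal.{0}, S ⊆ Set.Iio lam.ord ∧ #S < Cardinal.lift.{1} κ ∧
    ∃ a : Ordinal.{0}, a < κ.ord ∧
      ∀ q : SacksProd κ lam, IsThinning S a p.1 q.1 → q ∈ D

/-- The intersection of fewer than `κ` clubs of an uncountable regular cardinal `κ` is a club. -/
theorem IsClubIn.iInter {κ : Cardinal.{0}} (hreg : κ.IsRegular) (hunc : ℵ₀ < κ)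
    {η : Ordinal.{0}} (hη : η < κ.ord) {C : Ordinal.{0} → Set Ordinal.{0}}
    (hC : ∀ ξ, ξ < η → IsClubIn κ.ord (C ξ)) :
    IsClubIn κ.ord {o | o < κ.ord ∧ ∀ ξ, ξ < η → o ∈ C ξ} := by
  refine ⟨fun c hc => hc.1, fun o ho ho0 hlim => ⟨ho, fun ξ hξ => ?_⟩, fun i hi => ?_⟩
  · refine (hC ξ hξ).2.1 o ho ho0 fun i hi => ?_
    obtain ⟨c, hc, hic, hco⟩ := hlim i hi
    exact ⟨c, hc.2 ξ hξ, hic, hco⟩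
  have hstep : ∀ i, ∃ j, i < κ.ord →
      j < κ.ord ∧ i < j ∧ ∀ ξ, ξ < η → ∃ c ∈ C ξ, i < c ∧ c ≤ j := by
    intro i
    by_cases hi : i < κ.ord
    · have hnext : ∀ ξ : Set.Iio η, ∃ c ∈ C ξ, i < c := fun ξ => (hC ξ ξ.2).2.2 i hi
      choose next hnext_mem hnext_lt using hnext
      have hsup : ⨆ ξ, next ξ < κ.ord := by
        refine Ordinal.lift_iSup_lt_of_lt_cof ?_ fun ξ => (hC ξ ξ.2).1 _ (hnext_mem ξ)
        rw [← Ordinal.lift_cof, hreg.cof_ord]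
        simpa [Cardinal.mk_Iio_ordinal, ← Ordinal.lift_card] using Cardinal.lt_ord.1 hη
      refine ⟨max (i + 1) (⨆ ξ, next ξ), fun _ => ⟨max_lt ?_ hsup, ?_, fun ξ hξ => ?_⟩⟩
      · exact (Cardinal.isSuccLimit_ord hreg.aleph0_le).add_one_lt hi
      · exact lt_max_of_lt_left (lt_add_one i)
      · exact ⟨next ⟨ξ, hξ⟩, hnext_mem ⟨ξ, hξ⟩, hnext_lt ⟨ξ, hξ⟩,
          le_max_of_le_right (Ordinal.le_iSup next ⟨ξ, hξ⟩)⟩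
    · exact ⟨0, fun h => absurd h hi⟩
  choose g hg using hstep
  have hiter : ∀ n : ℕ, g^[n] i < κ.ord := by
    intro n
    induction n with
    | zero => exact hi
    | succ n ih => rw [Function.iterate_succ_apply']; exact (hg _ ih).1
  have hsup : ⨆ n : ℕ, g^[n] i < κ.ord := by
    refine Ordinal.iSup_lt_of_lt_cof ?_ hiter
    rwa [hreg.cof_ord, Cardinal.mk_nat]
  have hlt : ∀ n : ℕ, g^[n] i < ⨆ n : ℕ, g^[n] i := fun n =>
    ((hg _ (hiter n)).2.1.trans_eq (Function.iterate_succ_apply' g n i).symm).trans_le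
      (Ordinal.le_iSup (fun n : ℕ => g^[n] i) (n + 1))
  refine ⟨⨆ n : ℕ, g^[n] i, ⟨hsup, fun ξ hξ => ?_⟩, hlt 0⟩
  refine (hC ξ hξ).2.1 _ hsup (pos_of_gt (hlt 0)).ne' fun j hj => ?_
  obtain ⟨n, hn⟩ := Ordinal.lt_iSup_iff.1 hj
  obtain ⟨c, hc, hnc, hcg⟩ := (hg _ (hiter n)).2.2 ξ hξ
  refine ⟨c, hc, hn.trans hnc, hcg.trans_lt ?_⟩
  rw [← Function.iterate_succ_apply' g n i]
  exact hlt (n + 1)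

namespace BNode

variable {κ : Cardinal.{0}}

@[ext]
theorem ext {s t : BNode κ} (hlen : s.len = t.len) (hval : ∀ i, i < s.len → s.val i = t.val i) :
    s = t := by
  have hv : s.val = t.val := by
    funext i
    by_cases hi : i < s.len
    · exact hval i hi
    · rw [s.val_false i (not_lt.1 hi), t.val_false i (hlen ▸ not_lt.1 hi)]
  cases s; cases t
  simp_all

/-- The node of length `c` given by the first `c` values of `x`. -/
def trunc (x : Ordinal.{0} → Bool) (c : Ordinal.{0}) (hc : c < κ.ord) : BNode κ where
  len := c
  len_lt := hc
  val i := if i < c then x i else false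
  val_false _ hi := if_neg (not_lt.2 hi)

theorem trunc_val_of_lt {x : Ordinal.{0} → Bool} {c i : Ordinal.{0}} (hc : c < κ.ord)
    (hi : i < c) : (trunc x c hc).val i = x i :=
  if_pos hi

theorem trunc_ext_trunc {x : Ordinal.{0} → Bool} {c d : Ordinal.{0}} (hcd : c ≤ d)
    (hc : c < κ.ord) (hd : d < κ.ord) : (trunc x c hc).Ext (trunc x d hd) :=
  ⟨hcd, fun _ hi => (trunc_val_of_lt hd (lt_of_lt_of_le hi hcd)).trans (trunc_val_of_lt hc hi).symm⟩

theorem snoc_len {s : BNode κ} (h : s.len + 1 < κ.ord) (b : Bool) :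
    (s.snoc b).len = s.len + 1 := by
  simp [snoc, h]

theorem snoc_val_of_lt {s : BNode κ} (h : s.len + 1 < κ.ord) (b : Bool) {i : Ordinal.{0}}
    (hi : i < s.len) : (s.snoc b).val i = s.val i := by
  simp [snoc, h, hi]

theorem snoc_val_len {s : BNode κ} (h : s.len + 1 < κ.ord) (b : Bool) :
    (s.snoc b).val s.len = b := by
  simp [snoc, h]

theorem trunc_add_one {x : Ordinal.{0} → Bool} {c : Ordinal.{0}} (hc : c < κ.ord)
    (hc' : c + 1 < κ.ord) : trunc x (c + 1) hc' = (trunc x c hc).snoc (x c) := by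
  refine BNode.ext (snoc_len (s := trunc x c hc) hc' _).symm fun i hi => ?_
  rw [trunc_val_of_lt hc' hi]
  rcases (Order.lt_add_one_iff.1 hi).lt_or_eq with h | rfl
  · rw [snoc_val_of_lt (s := trunc x c hc) hc' _ h, trunc_val_of_lt hc h]
  · exact (snoc_val_len (s := trunc x i hc) hc' _).symm

/-- A proper extension `t` of `s` extends `s⌢b`, where `b` is the value of `t` at `length s`. -/
theorem Ext.snoc_ext {s t : BNode κ} (hst : s.Ext t) (hlt : s.len < t.len) :
    (s.snoc (t.val s.len)).Ext t := by
  have h1 : s.len + 1 ≤ t.len := Order.add_one_le_iff.2 hlt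
  have h : s.len + 1 < κ.ord := h1.trans_lt t.len_lt
  refine ⟨(snoc_len h _).trans_le h1, fun i hi => ?_⟩
  rw [snoc_len h] at hi
  rcases (Order.lt_add_one_iff.1 hi).lt_or_eq with h' | rfl
  · rw [snoc_val_of_lt h _ h', hst.2 i h']
  · rw [snoc_val_len h]

open Classical in
/-- The leftmost branch of `q` through `s`: above `length s` it takes the value `false`
whenever the corresponding node belongs to `q`. -/
def leftmost (q : Set (BNode κ)) (s : BNode κ) (i : Ordinal.{0}) : Bool :=
  if i < s.len then s.val i
  else if ∃ t ∈ q, t.len = i + 1 ∧ (∀ j, (_ : j < i) → t.val j = leftmost q s j) ∧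
    t.val i = false then false else true
termination_by i

theorem leftmost_of_lt {q : Set (BNode κ)} {s : BNode κ} {i : Ordinal.{0}} (hi : i < s.len) :
    leftmost q s i = s.val i := by
  rw [leftmost, if_pos hi]

theorem snoc_leftmost_mem {q : Set (BNode κ)} {s : BNode κ} {i : Ordinal.{0}} (hs : s.len ≤ i)
    (hi : i < κ.ord) (hi' : i + 1 < κ.ord)
    (hsucc : ∃ b, (trunc (leftmost q s) i hi).snoc b ∈ q) :
    (trunc (leftmost q s) i hi).snoc (leftmost q s i) ∈ q := by
  have hlen : ∀ b, ((trunc (leftmost q s) i hi).snoc b).len = i + 1 := fun b => snoc_len hi' b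
  have hval : ∀ b j, j < i →
      ((trunc (leftmost q s) i hi).snoc b).val j = leftmost q s j := fun b j hj =>
    (snoc_val_of_lt (s := trunc (leftmost q s) i hi) hi' b hj).trans (trunc_val_of_lt hi hj)
  have hlast : ∀ b, ((trunc (leftmost q s) i hi).snoc b).val i = b := fun b =>
    snoc_val_len (s := trunc (leftmost q s) i hi) hi' b
  by_cases h : ∃ t ∈ q, t.len = i + 1 ∧ (∀ j, (_ : j < i) → t.val j = leftmost q s j) ∧
      t.val i = false
  · have hv : leftmost q s i = false := by
      rw [leftmost, if_neg (not_lt.2 hs), if_pos h]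
    obtain ⟨t, htq, htlen, htval, htlast⟩ := h
    have ht : (trunc (leftmost q s) i hi).snoc (leftmost q s i) = t := by
      refine BNode.ext ((hlen _).trans htlen.symm) fun j hj => ?_
      rw [hlen] at hj
      rcases (Order.lt_add_one_iff.1 hj).lt_or_eq with hj' | rfl
      · rw [hval _ _ hj', htval _ hj']
      · rw [hlast, hv, htlast]
    exact ht ▸ htq
  · have hv : leftmost q s i = true := by
      rw [leftmost, if_neg (not_lt.2 hs), if_neg h]
    obtain ⟨b, hb⟩ := hsucc
    cases b with
    | false => exact absurd ⟨_, hb, hlen _, fun j hj => hval _ j hj, hlast _⟩ h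
    | true => rwa [hv]

/-- In a tree closed under unions of chains and without maximal nodes, every node has
extensions of all larger lengths. -/
theorem exists_ext_of_len {q : Set (BNode κ)} (hinit : ∀ t ∈ q, ∀ s : BNode κ, s.Ext t → s ∈ q)
    (hchain : ∀ η : Ordinal.{0}, η < κ.ord → ∀ f : Ordinal.{0} → BNode κ,
      (∀ α β, α < β → β < η → (f α).Ext (f β)) → (∀ α, α < η → f α ∈ q) →
      ∀ u : BNode κ, (∀ α, α < η → (f α).Ext u) →
        (∀ i, i < u.len → ∃ α, α < η ∧ i < (f α).len) → u ∈ q)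
    (hsucc : ∀ t ∈ q, ∃ b, t.snoc b ∈ q) {s : BNode κ} (hs : s ∈ q) {c : Ordinal.{0}}
    (hsc : s.len ≤ c) (hc : c < κ.ord) : ∃ t ∈ q, s.Ext t ∧ t.len = c := by
  have hmem : ∀ c (hc : c < κ.ord), trunc (leftmost q s) c hc ∈ q := by
    intro c
    induction c using Ordinal.limitRecOn with
    | zero =>
      exact fun hc => hinit s hs _ ⟨zero_le, fun i hi => absurd hi not_lt_zero⟩
    | add_one d ih =>
      intro hc
      have hd : d < κ.ord := (lt_add_one d).trans hc
      rcases lt_or_ge d s.len with hds | hds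
      · refine hinit s hs _ ⟨Order.add_one_le_iff.2 hds, fun i hi => ?_⟩
        rw [trunc_val_of_lt hc hi, leftmost_of_lt (lt_of_lt_of_le hi (Order.add_one_le_iff.2 hds))]
      · rw [trunc_add_one hd hc]
        exact snoc_leftmost_mem hds hd hc (hsucc _ (ih hd))
    | limit d hd ih =>
      intro hc
      refine hchain d hc
        (fun α => trunc (leftmost q s) (min α d) ((min_le_right α d).trans_lt hc)) ?_ ?_ _ ?_ ?_
      · exact fun α β hαβ _ => trunc_ext_trunc (min_le_min_right d hαβ.le) _ _
      · intro α hα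
        simpa only [min_eq_left hα.le] using ih α hα (hα.trans hc)
      · exact fun α _ => trunc_ext_trunc (min_le_right α d) _ _
      · exact fun i hi => ⟨i + 1, hd.add_one_lt hi, lt_min (lt_add_one i) hi⟩
  refine ⟨trunc (leftmost q s) c hc, hmem c hc, ⟨hsc, fun i hi => ?_⟩, rfl⟩
  rw [trunc_val_of_lt hc (hi.trans_le hsc), leftmost_of_lt hi]

end BNode

/-- Every node of a perfect tree has an immediate successor in the tree. -/
theorem IsPerfectTree.exists_snoc_mem {κ : Cardinal.{0}} {p : Set (BNode κ)}
    (hp : IsPerfectTree p) {s : BNode κ} (hs : s ∈ p) : ∃ b, s.snoc b ∈ p := by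
  obtain ⟨t, ht, hst, hsplit⟩ := hp.2.2.1 s hs
  rcases hst.1.lt_or_eq with hlt | heq
  · exact ⟨_, hp.1 t ht _ (hst.snoc_ext hlt)⟩
  · have : s = t := BNode.ext heq fun i hi => (hst.2 i hi).symm
    exact ⟨false, this ▸ hsplit.1⟩

/-- `Sacks(κ)` is `<κ`-closed: the intersection of a `⊆`-decreasing
sequence of perfect `κ`-trees of length `η < κ` is a perfect `κ`-tree, and hence is a
lower bound of the sequence. -/
theorem sacks_lt_kappa_closed (κ : Cardinal.{0}) (hκ : κ.IsInaccessible)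
    (η : Ordinal.{0}) (hη : η < κ.ord) (f : Ordinal.{0} → Set (BNode κ))
    (hperf : ∀ ξ, ξ < η → IsPerfectTree (f ξ))
    (hdec : ∀ ξ ξ', ξ ≤ ξ' → ξ' < η → f ξ' ⊆ f ξ) :
    IsPerfectTree (⋂ ξ ∈ Set.Iio η, f ξ) ∧
      ∀ ξ, ξ < η → (⋂ ξ ∈ Set.Iio η, f ξ) ⊆ f ξ := by
  have hsub : ∀ ξ, ξ < η → (⋂ ξ ∈ Set.Iio η, f ξ) ⊆ f ξ := fun ξ hξ =>
    Set.biInter_subset_of_mem hξ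
  refine ⟨?_, hsub⟩
  set q := ⋂ ξ ∈ Set.Iio η, f ξ
  have hmem : ∀ s : BNode κ, s ∈ q ↔ ∀ ξ, ξ < η → s ∈ f ξ := fun s => Set.mem_iInter₂
  have hinit : ∀ t ∈ q, ∀ s : BNode κ, s.Ext t → s ∈ q := fun t ht s hst =>
    (hmem s).2 fun ξ hξ => (hperf ξ hξ).1 t (hsub ξ hξ ht) s hst
  have hchain : ∀ δ : Ordinal.{0}, δ < κ.ord → ∀ g : Ordinal.{0} → BNode κ,
      (∀ α β, α < β → β < δ → (g α).Ext (g β)) → (∀ α, α < δ → g α ∈ q) →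
      ∀ u : BNode κ, (∀ α, α < δ → (g α).Ext u) →
        (∀ i, i < u.len → ∃ α, α < δ ∧ i < (g α).len) → u ∈ q :=
    fun δ hδ g hg hgq u hu hlen => (hmem u).2 fun ξ hξ =>
      (hperf ξ hξ).2.1 δ hδ g hg (fun α hα => hsub ξ hξ (hgq α hα)) u hu hlen
  have hsucc : ∀ t ∈ q, ∃ b, t.snoc b ∈ q := by
    intro t ht
    by_contra! hcon
    have hout : ∀ b, ∃ ξ, ξ < η ∧ t.snoc b ∉ f ξ := fun b => by
      simpa [hmem] using hcon b
    choose ξ hξ hnot using hout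
    have hmax : max (ξ false) (ξ true) < η := max_lt (hξ _) (hξ _)
    obtain ⟨b, hb⟩ := (hperf _ hmax).exists_snoc_mem (hsub _ hmax ht)
    refine hnot b (hdec _ _ ?_ hmax hb)
    cases b
    · exact le_max_left _ _
    · exact le_max_right _ _
  have hclub : ∀ ξ, ∃ C : Set Ordinal.{0}, ξ < η → IsSplitClub (f ξ) C := fun ξ => by
    by_cases hξ : ξ < η
    · obtain ⟨C, hC⟩ := (hperf ξ hξ).2.2.2
      exact ⟨C, fun _ => hC⟩
    · exact ⟨∅, fun h => absurd h hξ⟩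
  choose C hC using hclub
  have hD := IsClubIn.iInter hκ.isRegular hκ.aleph0_lt hη fun ξ hξ => (hC ξ hξ).1
  have hsplit : ∀ s ∈ q,
      (Splits q s ↔ s.len ∈ {o | o < κ.ord ∧ ∀ ξ, ξ < η → o ∈ C ξ}) := by
    intro s hs
    refine ⟨fun h => ⟨s.len_lt, fun ξ hξ => ?_⟩, fun h => ?_⟩
    · exact ((hC ξ hξ).2 s (hsub ξ hξ hs)).1 ⟨hsub ξ hξ h.1, hsub ξ hξ h.2⟩
    · have hsp := fun ξ hξ => ((hC ξ hξ).2 s (hsub ξ hξ hs)).2 (h.2 ξ hξ)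
      exact ⟨(hmem _).2 fun ξ hξ => (hsp ξ hξ).1, (hmem _).2 fun ξ hξ => (hsp ξ hξ).2⟩
  refine ⟨hinit, hchain, fun s hs => ?_, _, hD, hsplit⟩
  obtain ⟨c, hc, hsc⟩ := hD.2.2 s.len s.len_lt
  obtain ⟨t, ht, hst, rfl⟩ := BNode.exists_ext_of_len hinit hchain hsucc hs hsc.le hc.1
  exact ⟨t, ht, hst, (hsplit t ht).2 hc⟩
end
end

section
/- Let κ be an inaccessible cardinal with 2^κ = κ^+, and let λ be a cardinal. Then every antichain in Sacks(κ,λ) has cardinality at most κ^+ (i.e., Sacks(κ,λ) satisfies the κ^{++}-chain condition). -/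
open Set Cardinal

noncomputable section

universe u

/-- A family of partial functions with domains of size at most `c` and values in a set of size
at most `μ = μ ^ c`, any two of which disagree somewhere on their common domain,
has size at most `μ`. -/
theorem Cardinal.mk_le_of_pairwise_disagree {I T A : Type u} {c μ : Cardinal.{u}}
    [Nonempty I] (hμ : ℵ₀ ≤ μ) (hμc : μ ^ c = μ) (hT : #T ≤ μ)
    (supp : A → Set I) (val : A → I → T) (hsupp : ∀ a, #(supp a) ≤ c)
    (hdis : ∀ a b, a ≠ b → ∃ i ∈ supp a ∩ supp b, val a i ≠ val b i) :
    #A ≤ μ := by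
  classical
  rcases isEmpty_or_nonempty A with hA | hA
  · simp
  induction c using Cardinal.inductionOn with | _ K
  have hpow : ∀ {d : Cardinal.{u}}, d ≤ #K → μ ^ d ≤ μ := fun hd =>
    (power_le_power_left (aleph0_pos.trans_le hμ).ne' hd).trans hμc.le
  have hSet : #(Set K) ≤ μ := by
    rw [mk_set, ← hμc]
    exact power_le_power_right ((natCast_le_aleph0 (n := 2)).trans hμ)
  have hFun : #(K → T) ≤ μ := by
    rw [← power_def, ← hμc]
    exact power_le_power_right hT
  have hKμ : #K ≤ μ := (cantor _).le.trans (mk_set.symm.le.trans hSet)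
  have henum : ∀ a, ∃ e : K → I, supp a ⊆ range e := by
    intro a
    obtain ⟨f⟩ := hsupp a
    obtain ⟨i₀⟩ := ‹Nonempty I›
    refine ⟨fun k => if h : ∃ x, f x = k then h.choose.1 else i₀, fun i hi => ⟨f ⟨i, hi⟩, ?_⟩⟩
    have h : ∃ x, f x = f ⟨i, hi⟩ := ⟨_, rfl⟩
    simp only [dif_pos h]
    rw [f.injective h.choose_spec]
  choose e he using henum
  have hpick : ∀ (D : Set K) (g : K → T) (x : D → I), ∃ q : A,
      (∃ p : A, ∀ k : D, val p (x k) = g k) → ∀ k : D, val q (x k) = g k := by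
    intro D g x
    by_cases h : ∃ p : A, ∀ k : D, val p (x k) = g k
    · exact ⟨h.choose, fun _ => h.choose_spec⟩
    · exact ⟨hA.some, fun h' => absurd h' h⟩
  choose pick hpick using hpick
  -- Terms of `W` name the coordinates in the closure of the empty set under `pick`.
  let W := WType (α := Set K × (K → T) × K) fun a => a.1
  let eval : W → I := WType.elim I fun x => e (pick x.1.1 x.1.2.1 x.2) x.1.2.2
  have hW : #W ≤ μ := by
    refine WType.cardinalMk_le_of_le ?_
    refine (sum_le_sum _ (fun _ => μ) fun a => hpow (mk_set_le _)).trans ?_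
    rw [sum_const', mk_prod, mk_prod]
    simp only [lift_id]
    exact mul_le_of_le hμ (mul_le_of_le hμ hSet (mul_le_of_le hμ hFun hKμ)) le_rfl
  let N := Σ a : Set K × (K → T), a.1 → W
  have hN : #N ≤ μ := by
    rw [mk_sigma]
    refine (sum_le_sum _ (fun _ => μ) fun a => ?_).trans ?_
    · rw [← power_def]
      exact (power_le_power_right hW).trans (hpow (mk_set_le _))
    · rw [sum_const', mk_prod]
      simp only [lift_id]
      exact mul_le_of_le hμ (mul_le_of_le hμ hSet hFun) le_rfl
  refine (mk_le_of_surjective (f := fun n : N => pick n.1.1 n.1.2 (eval ∘ n.2)) ?_).trans hN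
  intro p
  let D : Set K := {k | e p k ∈ range eval}
  choose h hh using fun k : D => k.2
  let g : K → T := fun k => val p (e p k)
  refine ⟨⟨(D, g), h⟩, ?_⟩
  have hq := hpick D g (eval ∘ h) ⟨p, fun k => by simp [g, hh]⟩
  by_contra hne
  obtain ⟨i, ⟨hiq, hip⟩, hval⟩ := hdis _ _ hne
  obtain ⟨j, rfl⟩ := he _ hiq
  obtain ⟨k, hk⟩ := he _ hip
  have hkD : k ∈ D := ⟨WType.mk (D, g, j) h, hk.symm⟩
  apply hval
  have := hq ⟨k, hkD⟩
  simp only [Function.comp_apply, hh, g] at this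
  rwa [hk] at this

theorem BNode.mk_le {κ : Cardinal.{0}} (hκ : κ.IsStrongLimit) :
    #(BNode κ) ≤ Cardinal.lift.{1} κ := by
  have hinf : ℵ₀ ≤ Cardinal.lift.{1} κ := aleph0_le_lift.2 hκ.aleph0_le
  let F : BNode κ → Σ o : Iio κ.ord, (Iio o.1 → Bool) :=
    fun s => ⟨⟨s.len, s.len_lt⟩, fun i => s.val i⟩
  have hF : Function.Injective F := by
    rintro ⟨l, hl, v, hv⟩ ⟨l', hl', v', hv'⟩ h
    obtain rfl : l = l' := congrArg (fun x => x.1.1) h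
    have h' := eq_of_heq (Sigma.mk.inj h).2
    have : v = v' := by
      funext i
      rcases lt_or_ge i l with hi | hi
      · exact congrFun h' ⟨i, hi⟩
      · rw [hv i hi, hv' i hi]
    subst this
    rfl
  refine (mk_le_of_injective hF).trans ?_
  rw [mk_sigma]
  refine (sum_le_sum _ (fun _ => Cardinal.lift.{1} κ) fun o => ?_).trans ?_
  · have ho : o.1.card < κ := lt_ord.1 o.2
    have := lift_le.{1}.2 (hκ.isStrongPrelimit ho).le
    simpa [mk_Iio_ordinal] using this
  · rw [sum_const', mk_Iio_ordinal, card_ord, mul_eq_self hinf]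

/-- Conditions agreeing on their common support are compatible. -/
theorem SacksCond.exists_le_of_agree {κ lam : Cardinal.{0}} (hκ : ℵ₀ ≤ κ)
    {p q : Ordinal.{0} → Set (BNode κ)} (hp : SacksCond κ lam p) (hq : SacksCond κ lam q)
    (h : ∀ α, α < lam.ord → p α ≠ Set.univ → q α ≠ Set.univ → p α = q α) :
    ∃ r, SacksCond κ lam r ∧ SacksLe lam r p ∧ SacksLe lam r q := by
  classical
  refine ⟨fun α => if p α = Set.univ then q α else p α, ⟨fun α hα => ?_, fun α hα => ?_, ?_⟩,
    fun α hα => ?_, fun α hα => ?_⟩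
  · dsimp only
    split_ifs
    exacts [hq.1 α hα, hp.1 α hα]
  · simp [hp.2.1 α hα, hq.2.1 α hα]
  · refine (mk_le_mk_of_subset (t := {α | α < lam.ord ∧ p α ≠ Set.univ} ∪
      {α | α < lam.ord ∧ q α ≠ Set.univ}) ?_).trans ((mk_union_le _ _).trans
      (add_le_of_le (aleph0_le_lift.2 hκ) hp.2.2 hq.2.2))
    rintro α ⟨hα, hne⟩
    by_cases hpα : p α = Set.univ
    · exact Or.inr ⟨hα, by simpa [hpα] using hne⟩
    · exact Or.inl ⟨hα, hpα⟩
  · dsimp only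
    split_ifs with hpα
    · simp [hpα]
    · rfl
  · dsimp only
    split_ifs with hpα
    · rfl
    · by_cases hqα : q α = Set.univ
      · simp [hqα]
      · exact (h α hα hpα hqα).subset

/-- If `κ` is inaccessible with `2^κ = κ⁺` and `λ` is a cardinal,
then every antichain in `Sacks(κ,λ)` has cardinality at most `κ⁺`
(the `κ⁺⁺`-chain condition). -/
theorem sacksProd_chain_condition (κ lam : Cardinal.{0}) (hκ : κ.IsInaccessible)
    (hgch : (2 : Cardinal.{0}) ^ κ = Order.succ κ)
    (A : Set (Ordinal.{0} → Set (BNode κ)))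
    (hA : ∀ p ∈ A, SacksCond κ lam p)
    (hanti : ∀ p ∈ A, ∀ q ∈ A, p ≠ q →
      ¬∃ r, SacksCond κ lam r ∧ SacksLe lam r p ∧ SacksLe lam r q) :
    #A ≤ Cardinal.lift.{1} (Order.succ κ) := by
  have hinf : ℵ₀ ≤ κ := hκ.isStrongLimit.aleph0_le
  refine mk_le_of_pairwise_disagree (c := Cardinal.lift.{1} κ)
    (supp := fun p : A => {α | α < lam.ord ∧ p.1 α ≠ Set.univ}) (val := fun p => p.1)
    (aleph0_le_lift.2 (hinf.trans (Order.le_succ κ))) ?_ ?_ (fun p => (hA _ p.2).2.2) ?_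
  · rw [← lift_power, ← hgch, ← power_mul, mul_eq_self hinf]
  · rw [mk_set, ← hgch, lift_two_power]
    exact power_le_power_left two_ne_zero (BNode.mk_le hκ.isStrongLimit)
  · intro p q hne
    by_contra! hcon
    exact hanti p p.2 q q.2 (Subtype.coe_injective.ne hne)
      ((hA _ p.2).exists_le_of_agree hinf (hA _ q.2)
        fun α hα hpα hqα => hcon α ⟨⟨hα, hpα⟩, hα, hqα⟩)
end
end

section
/- Let I be a set, μ an infinite cardinal, and for each i ∈ I let Q_i be a partial order with a greatest element 1_i that is almost homogeneous. Then the ≤μ-support product of the Q_i — the poset of functions p with p(i) ∈ Q_i for each i ∈ I and |{i ∈ I : p(i) ≠ 1_i}| ≤ μ, ordered pointwise — is almost homogeneous. -/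
open Set Cardinal

noncomputable section

universe u v

/-- The `≤μ`-support product of almost homogeneous partial orders with
greatest elements is almost homogeneous. -/
theorem almostHomogeneous_product {I : Type u} (μ : Cardinal.{u}) (hμ : ℵ₀ ≤ μ)
    (Q : I → Type v) [∀ i, PartialOrder (Q i)] [∀ i, OrderTop (Q i)]
    (hQ : ∀ i, AlmostHomogeneous (Q i)) :
    AlmostHomogeneous {p : ∀ i, Q i // #{i | p i ≠ ⊤} ≤ μ} := by
  intro p q
  choose f r hrp hrq using fun i => hQ i (p.1 i) (q.1 i)
  have support_map (x : ∀ i, Q i) : {i | x i ≠ ⊤} = {i | f i (x i) ≠ ⊤} := by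
    ext i
    simp
  let F : {p : ∀ i, Q i // #{i | p i ≠ ⊤} ≤ μ} ≃o {p : ∀ i, Q i // #{i | p i ≠ ⊤} ≤ μ} :=
    { toEquiv := (Equiv.piCongrRight fun i => (f i).toEquiv).subtypeEquiv fun x => by
        rw [support_map x]
        rfl
      map_rel_iff' := fun {x y} => forall_congr' fun i => (f i).le_iff_le }
  classical
  let s : ∀ i, Q i := fun i => if p.1 i = ⊤ ∧ q.1 i = ⊤ then ⊤ else r i
  have support_s : {i | s i ≠ ⊤} ⊆ {i | p.1 i ≠ ⊤} ∪ {i | q.1 i ≠ ⊤} := by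
    intro i hi
    by_contra h
    simp only [mem_union, mem_ofPred_eq, not_or, not_not] at h
    exact hi (if_pos h)
  have hs : #{i | s i ≠ ⊤} ≤ μ :=
    (mk_le_mk_of_subset support_s).trans <|
      (mk_union_le _ _).trans (add_le_of_le hμ p.2 q.2)
  refine ⟨F, ⟨s, hs⟩, fun i => ?_, fun i => ?_⟩
  · change s i ≤ f i (p.1 i)
    by_cases h : p.1 i = ⊤ ∧ q.1 i = ⊤
    · simp [h.1]
    · simpa only [s, if_neg h] using hrp i
  · change s i ≤ q.1 i
    by_cases h : p.1 i = ⊤ ∧ q.1 i = ⊤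
    · simp [h.2]
    · simpa only [s, if_neg h] using hrq i
end
end
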